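/- arXiv:1601.07109 — 2 statements merged into one kernel-verified Lean document; each statement's English description precedes it below -/
import Mathlib

section
/- Let f : (0,1) → ℝ satisfy f(1−x) = −f(x) for all x ∈ (0,1), and let c be a real-valued G-invariant alternating function on pairwise distinct 4-tuples of points of S¹ such that c(z₁, z₂, z₃, z₄) = f(λ) whenever (z₁, z₂, z₃, z₄) is cyclically oriented and λ ∈ (0,1) is the real number equal to the cross ratio [z₂:z₃:z₁:z₄]. Then for all 0 < x < y < 1, the alternating sum Σ_{j=0}^{4} (−1)^j · c(w₀, ..., ŵ_j, ..., w₄), where (w₀, w₁, w₂, w₃, w₄) = (−i, 1, −1, 𝒞(x), 𝒞(y)) and ŵ_j means omitting the j-th entry, equals f(x) − f(y) − f(x/y) − f((y−1)/(x−1)) + f(x(y−1)/(y(x−1))). -/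
open Complex

/-- The cross ratio `[z₁:z₂:z₃:z₄] = (z₁-z₃)(z₂-z₄)/((z₂-z₃)(z₁-z₄))`. -/
noncomputable def crossRatio (z₁ z₂ z₃ z₄ : ℂ) : ℂ :=
  ((z₁ - z₃) * (z₂ - z₄)) / ((z₂ - z₃) * (z₁ - z₄))

/-- A tuple `(z₁, …, z_k)` of points of `S¹` is *cyclically oriented* if it can be written as
`z_j = e^{iθ_j}` with `θ₁ < θ₂ < ⋯ < θ_k < θ₁ + 2π`. -/
def CyclicallyOriented {k : ℕ} (z : Fin k → ℂ) : Prop :=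
  ∃ θ : Fin k → ℝ, StrictMono θ ∧ (∀ i j : Fin k, θ j < θ i + 2 * Real.pi) ∧
    ∀ j, z j = Complex.exp (θ j * Complex.I)

/-- The Cayley transform `𝒞(z) = (z-i)/(z+i)`. -/
noncomputable def cayley (z : ℂ) : ℂ := (z - Complex.I) / (z + Complex.I)

/-- The Möbius transformation `z ↦ (az+b)/(b̄z+ā)` given by an element of `PU(1,1)`. -/
noncomputable def mobius (a b z : ℂ) : ℂ :=
  (a * z + b) / ((starRingEnd ℂ) b * z + (starRingEnd ℂ) a)

/-- A tuple of pairwise distinct points of the unit circle `S¹`. -/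
def OnCircleInj {k : ℕ} (z : Fin k → ℂ) : Prop :=
  (∀ j, ‖z j‖ = 1) ∧ Function.Injective z

/-- `c` is alternating on pairwise distinct tuples of points of `S¹`. -/
def IsAlternating {k : ℕ} (c : (Fin k → ℂ) → ℝ) : Prop :=
  ∀ (σ : Equiv.Perm (Fin k)) (z : Fin k → ℂ), OnCircleInj z →
    c (fun i => z (σ i)) = (Equiv.Perm.sign σ : ℤ) * c z

/-- `c` is invariant under the diagonal action of `G = PU(1,1)` on tuples of points of `S¹`. -/
def IsGInvariant {k : ℕ} (c : (Fin k → ℂ) → ℝ) : Prop :=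
  ∀ a b : ℂ, ‖a‖ ^ 2 - ‖b‖ ^ 2 = 1 →
    ∀ z : Fin k → ℂ, OnCircleInj z → c (fun i => mobius a b (z i)) = c z

/-!
The Cayley transform maps `1, ∞, 0, x, y` to the five points `-i, 1, -1, 𝒞(x), 𝒞(y)`, and it moves
`ℝ ∪ {∞}` counterclockwise once around the circle. So the 5-tuple is cyclically oriented, each of
its five faces is too, and `c` is evaluated on a face as `f` of its cross ratio, which may be
computed in the real coordinates. The faces through `1, ∞, 0` give `f x` and `f y`; on the other
three the cross ratio has the form `1 - r`, and `f (1 - r) = -f r` gives the remaining terms.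
-/

section UnitInterval

variable {K : Type*} [Field K] [LinearOrder K] [IsStrictOrderedRing K] {x y : K}

theorem div_mem_Ioo_zero_one (hx : 0 < x) (hxy : x < y) : x / y ∈ Set.Ioo (0 : K) 1 :=
  ⟨div_pos hx (hx.trans hxy), (div_lt_one (hx.trans hxy)).mpr hxy⟩

theorem sub_one_div_sub_one_mem_Ioo_zero_one (hxy : x < y) (hy : y < 1) :
    (y - 1) / (x - 1) ∈ Set.Ioo (0 : K) 1 := by
  have hreflect := div_mem_Ioo_zero_one (sub_pos.mpr hy) (sub_lt_sub_left hxy 1)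
  rwa [← neg_sub y 1, ← neg_sub x 1, neg_div_neg_eq] at hreflect

theorem mul_sub_one_div_mul_sub_one_mem_Ioo_zero_one (hx : 0 < x) (hxy : x < y) (hy : y < 1) :
    x * (y - 1) / (y * (x - 1)) ∈ Set.Ioo (0 : K) 1 := by
  have hdiv := div_mem_Ioo_zero_one hx hxy
  have hsub := sub_one_div_sub_one_mem_Ioo_zero_one hxy hy
  rw [mul_div_mul_comm]
  exact (⟨_, hdiv⟩ * ⟨_, hsub⟩ : Set.Ioo (0 : K) 1).2

end UnitInterval

section Cayley

variable {z z₁ z₂ z₃ z₄ : ℂ}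

theorem ofReal_add_I_ne_zero (t : ℝ) : (t : ℂ) + I ≠ 0 := fun h => by
  simpa using congrArg im h

theorem zero_add_I_ne_zero : (0 : ℂ) + I ≠ 0 :=
  mod_cast ofReal_add_I_ne_zero 0

theorem one_add_I_ne_zero : (1 : ℂ) + I ≠ 0 :=
  mod_cast ofReal_add_I_ne_zero 1

theorem cayley_zero : cayley 0 = -1 := by
  simp [cayley]

theorem cayley_one : cayley 1 = -I := by
  rw [cayley, div_eq_iff one_add_I_ne_zero]
  linear_combination I_sq

theorem one_sub_cayley (hz : z + I ≠ 0) : 1 - cayley z = 2 * I / (z + I) := by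
  rw [cayley]
  field_simp
  ring

theorem cayley_sub_cayley (h₁ : z₁ + I ≠ 0) (h₂ : z₂ + I ≠ 0) :
    cayley z₁ - cayley z₂ = 2 * I * (z₁ - z₂) / ((z₁ + I) * (z₂ + I)) := by
  rw [cayley, cayley]
  field_simp
  ring

theorem crossRatio_cayley (h₁ : z₁ + I ≠ 0) (h₂ : z₂ + I ≠ 0) (h₃ : z₃ + I ≠ 0) (h₄ : z₄ + I ≠ 0) :
    crossRatio (cayley z₁) (cayley z₂) (cayley z₃) (cayley z₄) = crossRatio z₁ z₂ z₃ z₄ := by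
  rw [crossRatio, cayley_sub_cayley h₁ h₃, cayley_sub_cayley h₂ h₄, cayley_sub_cayley h₂ h₃,
    cayley_sub_cayley h₁ h₄, crossRatio]
  field_simp

theorem crossRatio_one_cayley (h₂ : z₂ + I ≠ 0) (h₃ : z₃ + I ≠ 0) (h₄ : z₄ + I ≠ 0) :
    crossRatio 1 (cayley z₂) (cayley z₃) (cayley z₄) = (z₂ - z₄) / (z₂ - z₃) := by
  rw [crossRatio, one_sub_cayley h₃, cayley_sub_cayley h₂ h₄, cayley_sub_cayley h₂ h₃,
    one_sub_cayley h₄]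
  field_simp

theorem crossRatio_swap_pairs (z₁ z₂ z₃ z₄ : ℂ) :
    crossRatio z₁ z₂ z₃ z₄ = crossRatio z₃ z₄ z₁ z₂ := by
  simp only [crossRatio]
  congr 1 <;> ring

theorem one_sub_mul_I_ne_zero (hz : z ≠ -I) : 1 - z * I ≠ 0 := fun h =>
  hz (by linear_combination I * h + z * I_sq)

theorem exp_two_mul_arctan_mul_I (hI : z ≠ I) (hnegI : z ≠ -I) :
    exp (2 * arctan z * I) = (1 + z * I) / (1 - z * I) := by
  have num_ne_zero : 1 + z * I ≠ 0 := fun h => hI (by linear_combination -I * h + z * I_sq)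
  rw [← exp_log (div_ne_zero num_ne_zero (one_sub_mul_I_ne_zero hnegI)), arctan]
  congr 1
  linear_combination -log ((1 + z * I) / (1 - z * I)) * I_sq

theorem cayley_eq_neg_exp_arctan (hI : z ≠ I) (hnegI : z ≠ -I) :
    cayley z = -exp (2 * arctan z * I) := by
  have hden : z + I ≠ 0 := mt eq_neg_of_add_eq_zero_left hnegI
  rw [exp_two_mul_arctan_mul_I hI hnegI, cayley, ← neg_div,
    div_eq_div_iff hden (one_sub_mul_I_ne_zero hnegI)]
  linear_combination (2 * z) * I_sq

theorem cayley_ofReal_eq_exp (t : ℝ) :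
    cayley t = exp ((Real.pi + 2 * Real.arctan t : ℝ) * I) := by
  have hI : (t : ℂ) ≠ I := fun h => by simpa using congrArg im h
  have hnegI : (t : ℂ) ≠ -I := fun h => by simpa using congrArg im h
  rw [cayley_eq_neg_exp_arctan hI hnegI, ← ofReal_arctan]
  push_cast
  rw [add_mul, exp_add, exp_pi_mul_I, neg_one_mul]

end Cayley

section Orientation

theorem cyclicallyOriented_of_last_lt {k : ℕ} {z : Fin (k + 1) → ℂ} {θ : Fin (k + 1) → ℝ}
    (hθ : StrictMono θ) (hlast : θ (Fin.last k) < θ 0 + 2 * Real.pi)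
    (hz : ∀ j, z j = exp (θ j * I)) : CyclicallyOriented z := by
  refine ⟨θ, hθ, fun i j => ?_, hz⟩
  have hj : θ j ≤ θ (Fin.last k) := hθ.monotone (Fin.le_last j)
  have hi : θ 0 ≤ θ i := hθ.monotone (Fin.zero_le i)
  linarith

theorem CyclicallyOriented.comp {k m : ℕ} {z : Fin k → ℂ} (hz : CyclicallyOriented z)
    {e : Fin m → Fin k} (he : StrictMono e) : CyclicallyOriented (z ∘ e) := by
  obtain ⟨θ, hθ, hlt, hexp⟩ := hz
  exact ⟨θ ∘ e, hθ.comp he, fun i j => hlt (e i) (e j), fun j => hexp (e j)⟩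

theorem CyclicallyOriented.subquadruple {k : ℕ} {z : Fin k → ℂ} (hz : CyclicallyOriented z)
    (i₀ i₁ i₂ i₃ : Fin k) (hi : i₀ < i₁ ∧ i₁ < i₂ ∧ i₂ < i₃) :
    CyclicallyOriented ![z i₀, z i₁, z i₂, z i₃] := by
  have he : StrictMono ![i₀, i₁, i₂, i₃] := by simp [hi]
  have hcomp := hz.comp he
  rwa [← FinVec.map_eq] at hcomp

-- The point `1` is `𝒞(∞)`, so these points are `𝒞` of a turn of `ℝ ∪ {∞}` starting at `s`.
theorem cyclicallyOriented_vecCons_cayley_vecCons_one {k : ℕ} {t : Fin (k + 1) → ℝ}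
    (ht : StrictMono t) {s : ℝ} (hs : t (Fin.last k) < s) :
    CyclicallyOriented (Matrix.vecCons (cayley s) (Matrix.vecCons 1 ((cayley ∘ (↑)) ∘ t))) := by
  have arctan_s_lt := Real.arctan_lt_pi_div_two s
  have lt_arctan_t (i) := Real.neg_pi_div_two_lt_arctan (t i)
  have hlast := Real.arctan_strictMono hs
  refine cyclicallyOriented_of_last_lt
    (θ := Matrix.vecCons (2 * Real.arctan s - Real.pi)
      (Matrix.vecCons 0 fun i => Real.pi + 2 * Real.arctan (t i))) ?_ ?_ ?_
  · have hangle : StrictMono fun i => Real.pi + 2 * Real.arctan (t i) := fun i j hij => by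
      linarith [Real.arctan_strictMono (ht hij)]
    exact (hangle.vecCons (by linarith [lt_arctan_t 0])).vecCons
      (by rw [Matrix.cons_val_zero]; linarith)
  · rw [← Fin.succ_last, ← Fin.succ_last]
    simp only [Matrix.cons_val_succ, Matrix.cons_val_zero]
    linarith
  · refine Fin.cases ?_ (Fin.cases ?_ fun i => ?_)
    · simp only [Matrix.cons_val_zero, cayley_ofReal_eq_exp]
      refine exp_eq_exp_iff_exists_int.mpr ⟨1, ?_⟩
      push_cast
      ring
    · simp
    · simpa only [Matrix.cons_val_succ, Function.comp_apply] using cayley_ofReal_eq_exp (t i)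

end Orientation

section CrossRatioExtension

/-- `c` takes the value `f λ` on the cyclically oriented quadruples with cross ratio
`[z₂:z₃:z₁:z₄] = λ ∈ (0, 1)`; in the indices of `Fin 4` these points are `z 1, z 2, z 0, z 3`. -/
def ExtendsViaCrossRatio (c : (Fin 4 → ℂ) → ℝ) (f : ℝ → ℝ) : Prop :=
  ∀ z : Fin 4 → ℂ, CyclicallyOriented z → ∀ lam : ℝ, lam ∈ Set.Ioo (0 : ℝ) 1 →
    crossRatio (z 1) (z 2) (z 0) (z 3) = (lam : ℂ) → c z = f lam

variable {c : (Fin 4 → ℂ) → ℝ} {f : ℝ → ℝ}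

theorem ExtendsViaCrossRatio.apply_eq_neg (hc : ExtendsViaCrossRatio c f)
    (hf : ∀ x ∈ Set.Ioo (0 : ℝ) 1, f (1 - x) = -f x) {z : Fin 4 → ℂ} (hz : CyclicallyOriented z)
    {r : ℝ} (hr : r ∈ Set.Ioo (0 : ℝ) 1)
    (hcross : crossRatio (z 1) (z 2) (z 0) (z 3) = ((1 - r : ℝ) : ℂ)) : c z = -f r :=
  (hc z hz (1 - r) (Set.Ioo.one_sub_mem hr) hcross).trans (hf r hr)

end CrossRatioExtension

section Pentagon

variable {x y : ℝ}

theorem cyclicallyOriented_cayley_pentagon (hx : 0 < x) (hxy : x < y) (hy : y < 1) :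
    CyclicallyOriented ![-I, 1, -1, cayley x, cayley y] := by
  have ht : StrictMono ![0, x, y] := by simp [hx, hxy]
  have hcyc : CyclicallyOriented
      ![cayley (1 : ℝ), 1, cayley (0 : ℝ), cayley x, cayley y] := by
    have hcayley := cyclicallyOriented_vecCons_cayley_vecCons_one ht (s := 1) hy
    rwa [← FinVec.map_eq] at hcayley
  simpa only [ofReal_zero, ofReal_one, cayley_zero, cayley_one] using hcyc

theorem crossRatio_neg_one_cayley_one_cayley (hy : y ≠ 0) :
    crossRatio (-1) (cayley x) 1 (cayley y) = ((1 - x / y : ℝ) : ℂ) := by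
  have hyc : (y : ℂ) ≠ 0 := mod_cast hy
  rw [← cayley_zero, crossRatio_swap_pairs,
    crossRatio_one_cayley (ofReal_add_I_ne_zero y) zero_add_I_ne_zero (ofReal_add_I_ne_zero x)]
  push_cast
  field_simp
  ring

theorem crossRatio_neg_one_cayley_neg_I_cayley (hx : x ≠ 1) (hy : y ≠ 0) :
    crossRatio (-1) (cayley x) (-I) (cayley y)
      = ((1 - x * (y - 1) / (y * (x - 1)) : ℝ) : ℂ) := by
  have hxc : (x : ℂ) - 1 ≠ 0 := mod_cast sub_ne_zero.mpr hx
  have hyc : (y : ℂ) ≠ 0 := mod_cast hy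
  rw [← cayley_zero, ← cayley_one, crossRatio_cayley zero_add_I_ne_zero
    (ofReal_add_I_ne_zero x) one_add_I_ne_zero (ofReal_add_I_ne_zero y), crossRatio]
  push_cast
  rw [zero_sub, zero_sub]
  field_simp
  ring

theorem crossRatio_one_cayley_neg_I_cayley (hx : x ≠ 1) :
    crossRatio 1 (cayley x) (-I) (cayley y) = ((1 - (y - 1) / (x - 1) : ℝ) : ℂ) := by
  have hxc : (x : ℂ) - 1 ≠ 0 := mod_cast sub_ne_zero.mpr hx
  rw [← cayley_one,
    crossRatio_one_cayley (ofReal_add_I_ne_zero x) one_add_I_ne_zero (ofReal_add_I_ne_zero y)]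
  push_cast
  field_simp
  ring

theorem crossRatio_one_neg_one_neg_I_cayley (t : ℝ) :
    crossRatio 1 (-1) (-I) (cayley t) = t := by
  rw [← cayley_zero, ← cayley_one,
    crossRatio_one_cayley zero_add_I_ne_zero one_add_I_ne_zero (ofReal_add_I_ne_zero t)]
  simp

theorem tau3_formula_general {f : ℝ → ℝ} (hf : ∀ x ∈ Set.Ioo (0 : ℝ) 1, f (1 - x) = -f x)
    {c : (Fin 4 → ℂ) → ℝ} (hc : ExtendsViaCrossRatio c f)
    (hx : 0 < x) (hxy : x < y) (hy : y < 1) :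
    c ![1, -1, cayley x, cayley y] - c ![-I, -1, cayley x, cayley y]
        + c ![-I, 1, cayley x, cayley y] - c ![-I, 1, -1, cayley y] + c ![-I, 1, -1, cayley x]
      = f x - f y - f (x / y) - f ((y - 1) / (x - 1)) + f (x * (y - 1) / (y * (x - 1))) := by
  have hy0 : 0 < y := hx.trans hxy
  have hx1 : x < 1 := hxy.trans hy
  have hcyc := cyclicallyOriented_cayley_pentagon hx hxy hy
  have face₀ : c ![1, -1, cayley x, cayley y] = -f (x / y) :=
    hc.apply_eq_neg hf (hcyc.subquadruple 1 2 3 4 (by decide))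
      (div_mem_Ioo_zero_one hx hxy) (crossRatio_neg_one_cayley_one_cayley hy0.ne')
  have face₁ : c ![-I, -1, cayley x, cayley y] = -f (x * (y - 1) / (y * (x - 1))) :=
    hc.apply_eq_neg hf (hcyc.subquadruple 0 2 3 4 (by decide))
      (mul_sub_one_div_mul_sub_one_mem_Ioo_zero_one hx hxy hy)
      (crossRatio_neg_one_cayley_neg_I_cayley hx1.ne hy0.ne')
  have face₂ : c ![-I, 1, cayley x, cayley y] = -f ((y - 1) / (x - 1)) :=
    hc.apply_eq_neg hf (hcyc.subquadruple 0 1 3 4 (by decide))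
      (sub_one_div_sub_one_mem_Ioo_zero_one hxy hy) (crossRatio_one_cayley_neg_I_cayley hx1.ne)
  have face₃ : c ![-I, 1, -1, cayley y] = f y :=
    hc _ (hcyc.subquadruple 0 1 2 4 (by decide))
      y ⟨hy0, hy⟩ (crossRatio_one_neg_one_neg_I_cayley y)
  have face₄ : c ![-I, 1, -1, cayley x] = f x :=
    hc _ (hcyc.subquadruple 0 1 2 3 (by decide))
      x ⟨hx, hx1⟩ (crossRatio_one_neg_one_neg_I_cayley x)
  rw [face₀, face₁, face₂, face₃, face₄]
  ring

end Pentagon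

/-- **The reduced differential `τ³` in cross ratio coordinates.** If `c` is the `G`-invariant
alternating extension of `f`, then the homogeneous differential `δ³c` evaluated at
`(-i, 1, -1, 𝒞(x), 𝒞(y))` is the 5-term (Spence–Abel) expression in `f`. -/
theorem tau3_formula (f : ℝ → ℝ) (hf : ∀ x ∈ Set.Ioo (0:ℝ) 1, f (1 - x) = -f x)
    (c : (Fin 4 → ℂ) → ℝ) (halt : IsAlternating c) (hinv : IsGInvariant c)
    (hres : ∀ z : Fin 4 → ℂ, CyclicallyOriented z → ∀ lam : ℝ, lam ∈ Set.Ioo (0:ℝ) 1 →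
      crossRatio (z 1) (z 2) (z 0) (z 3) = (lam : ℂ) → c z = f lam)
    (x y : ℝ) (hx : 0 < x) (hxy : x < y) (hy : y < 1) :
    c ![(1 : ℂ), -1, cayley (x : ℂ), cayley (y : ℂ)]
        - c ![-Complex.I, -1, cayley (x : ℂ), cayley (y : ℂ)]
        + c ![-Complex.I, 1, cayley (x : ℂ), cayley (y : ℂ)]
        - c ![-Complex.I, 1, -1, cayley (y : ℂ)]
        + c ![-Complex.I, 1, -1, cayley (x : ℂ)]
      = f x - f y - f (x / y) - f ((y - 1) / (x - 1)) + f (x * (y - 1) / (y * (x - 1))) :=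
  tau3_formula_general hf hres hx hxy hy
end

section
/- Let θ ∈ (0, 2π). Then the iterated average (1/2π)³·∫₀^{2π}∫₀^{2π}∫₀^{2π} e^{i(η−φ)}·c(e^{iη}, e^{iφ}, e^{iψ}, 1, e^{iθ}) dη dφ dψ equals −i·(ζ(2)/(2π²))·(2·sin(θ) + θ − π). -/
open Real Complex

/-- `c` is the cocycle `c(z̲) = -(ζ(2)/2)·(-1)^{z̲}` (with `ζ(2) = π²/6`), i.e. whenever a
permutation `σ` brings the tuple `z̲` into cyclically oriented position, `c(z̲)` equals
`-(ζ(2)/2)·sgn(σ)`. -/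
def OrientationProp (c : (Fin 5 → ℂ) → ℝ) : Prop :=
  ∀ (z : Fin 5 → ℂ) (σ : Equiv.Perm (Fin 5)),
    CyclicallyOriented (fun i => z (σ i)) →
    c z = -(π ^ 2 / 6 / 2) * ((Equiv.Perm.sign σ : ℤ) : ℝ)

/-!
For pairwise distinct angles `x₀, …, x₄` in `[0, 2π)` the sign `(-1)^z` is the product of the
`sgn(x_j - x_i)` over `i < j`. Hence `c(e^{iη}, e^{iφ}, e^{iψ}, 1, e^{iθ})` is
`π²/12 · sgn(θ - ψ) · h(φ) h(η) sgn(φ - η)`, where `h` is `-1` between `ψ` and `θ` and `1`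
elsewhere, that is, `h = 1 - 2 · 𝟙_A` for the arc `A` between them. So the integral over `η` and `φ`
splits into four integrals of `K(φ, η) = sgn(φ - η) e^{i(η - φ)}` over products of `A` and
`[0, 2π]`. Since `K(η, φ)` is minus the conjugate of `K(φ, η)`, the two mixed ones add up to `2i`
times the imaginary part of one of them, and only elementary integrals are left.
-/

open MeasureTheory
open scoped ComplexConjugate

section Cocycle

lemma sign_eq_prod_sign_sub_of_strictMono {n : ℕ} {x : Fin n → ℝ} {σ : Equiv.Perm (Fin n)}
    (hσ : StrictMono (x ∘ σ)) :
    ((Equiv.Perm.sign σ : ℤ) : ℝ) = ∏ i, ∏ j ∈ Finset.Ioi i, Real.sign (x j - x i) := by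
  have sorted_prod : ∏ i, ∏ j ∈ Finset.Ioi i, Real.sign (x (σ j) - x (σ i)) = 1 :=
    Finset.prod_eq_one fun i _ => Finset.prod_eq_one fun j hj =>
      Real.sign_of_pos (sub_pos.2 (hσ (Finset.mem_Ioi.1 hj)))
  have reorder := σ.prod_Ioi_comp_eq_sign_mul_prod (f := fun i j => Real.sign (x j - x i))
    fun i j => by rw [← Real.sign_neg, neg_sub]
  rw [sorted_prod] at reorder
  rcases Int.units_eq_one_or (Equiv.Perm.sign σ) with h | h <;> rw [h] at reorder ⊢ <;>
    push_cast at reorder ⊢ <;> linarith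

lemma cyclicallyOriented_exp {k : ℕ} {x : Fin k → ℝ} {t : ℝ} (hx : StrictMono x)
    (hxt : ∀ i, x i ∈ Set.Ico t (t + 2 * π)) :
    CyclicallyOriented fun i => Complex.exp (x i * I) :=
  ⟨x, hx, fun i j => by linarith [(hxt i).1, (hxt j).2], fun _ => rfl⟩

lemma OrientationProp.apply_exp {c : (Fin 5 → ℂ) → ℝ} (hc : OrientationProp c) {x : Fin 5 → ℝ}
    {t : ℝ} (hx : Function.Injective x) (hxt : ∀ i, x i ∈ Set.Ico t (t + 2 * π)) :
    c (fun i => Complex.exp (x i * I)) =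
      -(π ^ 2 / 6 / 2) * ∏ i, ∏ j ∈ Finset.Ioi i, Real.sign (x j - x i) := by
  have sorted : StrictMono (x ∘ Tuple.sort x) :=
    (Tuple.monotone_sort x).strictMono_of_injective (hx.comp (Tuple.sort x).injective)
  rw [hc _ _ (cyclicallyOriented_exp sorted fun i => hxt _),
    sign_eq_prod_sign_sub_of_strictMono sorted]

/-- The sign of the position of `x` relative to the arc between `a` and `b`: `-1` strictly between
them, `1` strictly outside and `0` at the endpoints, whichever of `a` and `b` is the larger. It is
the factor that each of `η` and `φ` contributes to the cocycle. -/
noncomputable def arcSign (a b x : ℝ) : ℝ :=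
  Real.sign (a - x) * Real.sign (b - x)

lemma arcSign_comm (a b x : ℝ) : arcSign a b x = arcSign b a x :=
  mul_comm _ _

lemma OrientationProp.apply_one_exp {c : (Fin 5 → ℂ) → ℝ} (hc : OrientationProp c)
    {η φ ψ θ : ℝ} (hη : η ∈ Set.Ioo 0 (2 * π)) (hφ : φ ∈ Set.Ioo 0 (2 * π))
    (hψ : ψ ∈ Set.Ioo 0 (2 * π)) (hθ : θ ∈ Set.Ioo 0 (2 * π))
    (hηs : η ∉ ({φ, ψ, θ} : Set ℝ)) (hφs : φ ∉ ({ψ, θ} : Set ℝ)) (hψθ : ψ ≠ θ) :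
    c ![Complex.exp (η * I), Complex.exp (φ * I), Complex.exp (ψ * I), 1, Complex.exp (θ * I)] =
      π ^ 2 / 12 * Real.sign (θ - ψ) *
        (arcSign ψ θ φ * (arcSign ψ θ η * Real.sign (φ - η))) := by
  simp only [Set.mem_insert_iff, Set.mem_singleton_iff, not_or] at hηs hφs
  have tuple_eq : ![Complex.exp (η * I), Complex.exp (φ * I), Complex.exp (ψ * I), 1,
      Complex.exp (θ * I)] = fun i => Complex.exp ((![η, φ, ψ, 0, θ] i : ℝ) * I) := by
    funext i
    fin_cases i <;> simp
  have angles_injective : Function.Injective ![η, φ, ψ, 0, θ] := by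
    intro i j hij
    fin_cases i <;> fin_cases j <;> simp at hij ⊢ <;> grind
  have angles_mem : ∀ i, ![η, φ, ψ, 0, θ] i ∈ Set.Ico 0 (0 + 2 * π) := by
    intro i
    rw [zero_add]
    fin_cases i
    exacts [Set.Ioo_subset_Ico_self hη, Set.Ioo_subset_Ico_self hφ, Set.Ioo_subset_Ico_self hψ,
      ⟨le_rfl, Real.two_pi_pos⟩, Set.Ioo_subset_Ico_self hθ]
  rw [tuple_eq, hc.apply_exp angles_injective angles_mem]
  have sign_neg_angle {α : ℝ} (hα : α ∈ Set.Ioo 0 (2 * π)) : Real.sign (-α) = -1 :=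
    Real.sign_of_neg (neg_neg_of_pos hα.1)
  simp only [Fin.prod_univ_succ, Fin.prod_Ioi_zero, Fin.prod_Ioi_succ, Fin.prod_univ_zero,
    Matrix.cons_val_zero, Matrix.cons_val_succ, zero_sub, sub_zero, sign_neg_angle hη,
    sign_neg_angle hφ, sign_neg_angle hψ, Real.sign_of_pos hθ.1, arcSign]
  ring

end Cocycle

section SignIntegrals

variable {E : Type*} [NormedAddCommGroup E] [NormedSpace ℝ E]

lemma integral_congr_Ioo_diff_countable {f g : ℝ → E} {u v : ℝ} {s : Set ℝ} (hs : s.Countable)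
    (huv : u ≤ v) (hfg : ∀ x ∈ Set.Ioo u v, x ∉ s → f x = g x) :
    ∫ x in u..v, f x = ∫ x in u..v, g x := by
  refine intervalIntegral.integral_congr_ae ?_
  filter_upwards [hs.ae_notMem volume, volume.ae_ne v] with x hxs hxv hx
  rw [Set.uIoc_of_le huv] at hx
  exact hfg x ⟨hx.1, lt_of_le_of_ne hx.2 hxv⟩ hxs

lemma abs_sign_le_one (x : ℝ) : |Real.sign x| ≤ 1 := by
  rcases Real.sign_apply_eq x with h | h | h <;> simp [h]

lemma measurable_sign : Measurable Real.sign :=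
  Measurable.ite measurableSet_Iio measurable_const
    (Measurable.ite measurableSet_Ioi measurable_const measurable_const)

variable {g : ℝ → E} {a b u v y : ℝ}

lemma intervalIntegrable_sign_sub_smul (hg : IntervalIntegrable g volume u v) (y : ℝ) :
    IntervalIntegrable (fun x => Real.sign (y - x) • g x) volume u v := by
  rw [intervalIntegrable_iff] at hg ⊢
  have hsign : Measurable fun x => Real.sign (y - x) :=
    measurable_sign.comp (measurable_const.sub measurable_id)
  exact hg.bdd_smul 1 hsign.aestronglyMeasurable (ae_of_all _ fun x => abs_sign_le_one _)

lemma integral_sign_sub_smul_of_le (huv : u ≤ v) (hvy : v ≤ y) :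
    ∫ x in u..v, Real.sign (y - x) • g x = ∫ x in u..v, g x :=
  intervalIntegral.integral_congr_Ioo_of_le huv fun x hx => by
    simp [Real.sign_of_pos (sub_pos.2 (hx.2.trans_le hvy))]

lemma integral_sign_sub_smul_of_ge (huv : u ≤ v) (hyu : y ≤ u) :
    ∫ x in u..v, Real.sign (y - x) • g x = -∫ x in u..v, g x := by
  rw [← intervalIntegral.integral_neg]
  exact intervalIntegral.integral_congr_Ioo_of_le huv fun x hx => by
    simp [Real.sign_of_neg (sub_neg.2 (hyu.trans_lt hx.1))]

lemma integral_sign_sub_smul (hg : IntervalIntegrable g volume u v) (hy : y ∈ Set.Icc u v) :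
    ∫ x in u..v, Real.sign (y - x) • g x = (∫ x in u..y, g x) - ∫ x in y..v, g x := by
  have hsg := intervalIntegrable_sign_sub_smul hg y
  have hy' : y ∈ Set.uIcc u v := Set.Icc_subset_uIcc hy
  rw [← intervalIntegral.integral_add_adjacent_intervals
      (hsg.mono_set (Set.uIcc_subset_uIcc_left hy'))
      (hsg.mono_set (Set.uIcc_subset_uIcc_right hy')),
    integral_sign_sub_smul_of_le hy.1 le_rfl, integral_sign_sub_smul_of_ge hy.2 le_rfl,
    sub_eq_add_neg]

lemma integral_sign_sub (hy : y ∈ Set.Icc u v) :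
    ∫ x in u..v, Real.sign (y - x) = 2 * y - u - v := by
  have h := integral_sign_sub_smul (g := fun _ => (1 : ℝ)) intervalIntegrable_const hy
  simp only [smul_eq_mul, mul_one, intervalIntegral.integral_const] at h
  rw [h]
  ring

lemma integral_arcSign_smul (hg : IntervalIntegrable g volume u v) (hua : u ≤ a) (hab : a ≤ b)
    (hbv : b ≤ v) :
    ∫ x in u..v, arcSign a b x • g x = (∫ x in u..v, g x) - (2 : ℝ) • ∫ x in a..b, g x := by
  have hgu : IntervalIntegrable g volume u a := hg.mono_set (by grind [Set.uIcc_of_le])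
  have hgab : IntervalIntegrable g volume a b := hg.mono_set (by grind [Set.uIcc_of_le])
  have hgv : IntervalIntegrable g volume b v := hg.mono_set (by grind [Set.uIcc_of_le])
  simp only [arcSign, mul_smul]
  rw [integral_sign_sub_smul (intervalIntegrable_sign_sub_smul hg b) ⟨hua, hab.trans hbv⟩,
    integral_sign_sub_smul_of_le hua hab,
    integral_sign_sub_smul (hgab.trans hgv) ⟨hab, hbv⟩,
    ← intervalIntegral.integral_add_adjacent_intervals (hgu.trans hgab) hgv,
    ← intervalIntegral.integral_add_adjacent_intervals hgu hgab, two_smul]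
  abel

lemma integral_integral_arcSign_smul {k : ℝ → ℝ → E}
    (hk : ∀ x, IntervalIntegrable (k x) volume u v)
    (hk_uv : IntervalIntegrable (fun x => ∫ y in u..v, k x y) volume u v)
    (hk_ab : IntervalIntegrable (fun x => ∫ y in a..b, k x y) volume u v)
    (hua : u ≤ a) (hab : a ≤ b) (hbv : b ≤ v) :
    ∫ x in u..v, ∫ y in u..v, arcSign a b x • arcSign a b y • k x y =
      (∫ x in u..v, ∫ y in u..v, k x y) - (2 : ℝ) • (∫ x in u..v, ∫ y in a..b, k x y)
        - (2 : ℝ) • (∫ x in a..b, ∫ y in u..v, k x y)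
        + (4 : ℝ) • ∫ x in a..b, ∫ y in a..b, k x y := by
  have hsub : Set.uIcc a b ⊆ Set.uIcc u v := by
    grind [Set.uIcc_of_le]
  have hk_two_ab : IntervalIntegrable (fun x => (2 : ℝ) • ∫ y in a..b, k x y) volume u v :=
    hk_ab.smul 2
  simp only [intervalIntegral.integral_smul, integral_arcSign_smul (hk _) hua hab hbv]
  rw [integral_arcSign_smul (hk_uv.sub hk_two_ab) hua hab hbv,
    intervalIntegral.integral_sub hk_uv hk_two_ab,
    intervalIntegral.integral_sub (hk_uv.mono_set hsub) (hk_two_ab.mono_set hsub)]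
  simp only [intervalIntegral.integral_smul]
  module

end SignIntegrals

section SignKernel

/-- The kernel `sgn(x - y) e^{i(y - x)}`, which is antisymmetric up to complex conjugation. It is
the part of the integrand, with `x = φ` and `y = η`, that couples the two inner variables. -/
noncomputable def signKernel (x y : ℝ) : ℂ :=
  Real.sign (x - y) • Complex.exp ((y - x : ℝ) * I)

lemma signKernel_swap (x y : ℝ) : signKernel y x = -conj (signKernel x y) := by
  have sign_swap : Real.sign (y - x) = -Real.sign (x - y) := by rw [← Real.sign_neg, neg_sub]
  have exp_swap : Complex.exp ((x - y : ℝ) * I) = conj (Complex.exp ((y - x : ℝ) * I)) := by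
    rw [← Complex.exp_conj, map_mul, conj_ofReal, conj_I, mul_neg, ← neg_mul, ← ofReal_neg, neg_sub]
  rw [signKernel, signKernel, sign_swap, exp_swap, neg_smul, real_smul, real_smul, map_mul,
    conj_ofReal]

lemma measurable_signKernel : Measurable (Function.uncurry signKernel) := by
  have hsign : Measurable fun p : ℝ × ℝ => Real.sign (p.1 - p.2) :=
    measurable_sign.comp (measurable_fst.sub measurable_snd)
  exact hsign.smul (by fun_prop)

lemma norm_signKernel_le_one (x y : ℝ) : ‖signKernel x y‖ ≤ 1 := by
  rw [signKernel, norm_smul, Complex.norm_exp_ofReal_mul_I, mul_one]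
  exact abs_sign_le_one _

lemma integrableOn_signKernel {s : Set (ℝ × ℝ)} (hs : Bornology.IsBounded s) :
    IntegrableOn (Function.uncurry signKernel) s :=
  Measure.integrableOn_of_bounded hs.measure_lt_top.ne measurable_signKernel.aestronglyMeasurable
    (ae_of_all _ fun p => norm_signKernel_le_one p.1 p.2)

lemma intervalIntegrable_signKernel (x u v : ℝ) :
    IntervalIntegrable (signKernel x) volume u v :=
  intervalIntegrable_sign_sub_smul (Continuous.intervalIntegrable (by fun_prop) u v) x

lemma intervalIntegrable_integral_signKernel (a b u v : ℝ) :
    IntervalIntegrable (fun x => ∫ y in a..b, signKernel x y) volume u v := by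
  simp only [intervalIntegral.intervalIntegral_eq_integral_uIoc, intervalIntegrable_iff]
  refine Integrable.smul _ (Integrable.integral_prod_left (f := Function.uncurry signKernel) ?_)
  rw [Measure.prod_restrict]
  exact integrableOn_signKernel ((Metric.isBounded_Ioc _ _).prod (Metric.isBounded_Ioc _ _))

lemma integral_integral_signKernel_swap (a b u v : ℝ) :
    ∫ x in u..v, ∫ y in a..b, signKernel x y =
      -conj (∫ x in a..b, ∫ y in u..v, signKernel x y) := by
  rw [intervalIntegral_intervalIntegral_swap
    (integrableOn_signKernel ((Metric.isBounded_Ioc _ _).prod (Metric.isBounded_Ioc _ _)))]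
  simp only [← intervalIntegral.intervalIntegral_conj, ← intervalIntegral.integral_neg,
    ← signKernel_swap]

lemma integral_exp_mul_I (p q : ℝ) :
    ∫ t in p..q, Complex.exp (t * I) = -I * (Complex.exp (q * I) - Complex.exp (p * I)) := by
  simp only [mul_comm _ I]
  rw [integral_exp_mul_complex I_ne_zero, div_I]
  ring

variable {a b u v : ℝ}

lemma integral_signKernel {x : ℝ} (hx : x ∈ Set.Icc u v) :
    ∫ y in u..v, signKernel x y =
      -2 * I + I * (Complex.exp ((u - x : ℝ) * I) + Complex.exp ((v - x : ℝ) * I)) := by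
  have integral_exp_sub (p q : ℝ) := intervalIntegral.integral_comp_sub_right (a := p) (b := q)
    (fun t : ℝ => Complex.exp (t * I)) x
  simp only [signKernel]
  rw [integral_sign_sub_smul (Continuous.intervalIntegrable (by fun_prop) u v) hx,
    integral_exp_sub, integral_exp_sub, integral_exp_mul_I, integral_exp_mul_I, sub_self]
  simp only [ofReal_zero, zero_mul, Complex.exp_zero]
  ring

lemma integral_integral_signKernel (hua : u ≤ a) (hab : a ≤ b) (hbv : b ≤ v) :
    ∫ x in a..b, ∫ y in u..v, signKernel x y =
      -2 * I * (b - a : ℝ)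
        + (Complex.exp ((u - a : ℝ) * I) - Complex.exp ((u - b : ℝ) * I))
        + (Complex.exp ((v - a : ℝ) * I) - Complex.exp ((v - b : ℝ) * I)) := by
  have integral_exp_sub (p : ℝ) := intervalIntegral.integral_comp_sub_left (a := a) (b := b)
    (fun t : ℝ => Complex.exp (t * I)) p
  rw [intervalIntegral.integral_congr_Ioo_of_le hab fun x hx =>
      integral_signKernel ⟨hua.trans hx.1.le, hx.2.le.trans hbv⟩,
    intervalIntegral.integral_add (by simp) (Continuous.intervalIntegrable (by fun_prop) a b),
    intervalIntegral.integral_const, intervalIntegral.integral_const_mul,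
    intervalIntegral.integral_add (Continuous.intervalIntegrable (by fun_prop) a b)
      (Continuous.intervalIntegrable (by fun_prop) a b),
    integral_exp_sub, integral_exp_sub, integral_exp_mul_I, integral_exp_mul_I, real_smul]
  linear_combination
    (-Complex.exp ((u - a : ℝ) * I) + Complex.exp ((u - b : ℝ) * I)
      - Complex.exp ((v - a : ℝ) * I) + Complex.exp ((v - b : ℝ) * I)) * I_mul_I

lemma integral_integral_signKernel_self (hab : a ≤ b) :
    ∫ x in a..b, ∫ y in a..b, signKernel x y = -2 * I * (b - a - Real.sin (b - a) : ℝ) := by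
  have sin_eq := Complex.two_sin (b - a : ℝ)
  rw [integral_integral_signKernel le_rfl hab le_rfl, ← neg_sub b a, sub_self, sub_self]
  push_cast at sin_eq ⊢
  rw [zero_mul, Complex.exp_zero]
  linear_combination -I * sin_eq
    + (Complex.exp ((b - a) * I) - Complex.exp (-(b - a) * I)) * I_mul_I

lemma integral_integral_signKernel_add_swap (ha : 0 ≤ a) (hab : a ≤ b) (hb : b ≤ 2 * π) :
    (∫ x in (0 : ℝ)..(2 * π), ∫ y in a..b, signKernel x y)
        + ∫ x in a..b, ∫ y in (0 : ℝ)..(2 * π), signKernel x y =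
      -4 * I * (b - a - (Real.sin b - Real.sin a) : ℝ) := by
  rw [integral_integral_signKernel_swap, neg_add_eq_sub, sub_conj,
    integral_integral_signKernel ha hab hb]
  have im_eq : (-2 * I * (b - a : ℝ)).im = -2 * (b - a) := by simp
  simp only [add_im, sub_im, exp_ofReal_mul_I_im, zero_sub, Real.sin_neg, Real.sin_two_pi_sub,
    im_eq]
  push_cast
  ring

lemma integral_integral_arcSign_smul_signKernel (ha : 0 ≤ a) (hab : a ≤ b) (hb : b ≤ 2 * π) :
    ∫ x in (0 : ℝ)..(2 * π), ∫ y in (0 : ℝ)..(2 * π),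
        arcSign a b x • arcSign a b y • signKernel x y =
      -2 * I * (2 * π + 4 * (Real.sin b - Real.sin a) - 4 * Real.sin (b - a) : ℝ) := by
  have whole := integral_integral_signKernel_self Real.two_pi_pos.le
  have cross := integral_integral_signKernel_add_swap ha hab hb
  have arc := integral_integral_signKernel_self hab
  rw [sub_zero, Real.sin_two_pi] at whole
  rw [integral_integral_arcSign_smul (fun x => intervalIntegrable_signKernel x _ _)
    (intervalIntegrable_integral_signKernel _ _ _ _)
    (intervalIntegrable_integral_signKernel _ _ _ _) ha hab hb]
  simp only [real_smul]
  push_cast at *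
  linear_combination whole - 2 * cross + 4 * arc

lemma sign_sub_smul_integral_integral_arcSign (ha : a ∈ Set.Icc 0 (2 * π))
    (hb : b ∈ Set.Icc 0 (2 * π)) :
    Real.sign (b - a) • ∫ x in (0 : ℝ)..(2 * π), ∫ y in (0 : ℝ)..(2 * π),
        arcSign a b x • arcSign a b y • signKernel x y =
      -2 * I * (2 * π * Real.sign (b - a) + 4 * (Real.sin b - Real.sin a)
        - 4 * Real.sin (b - a) : ℝ) := by
  rcases lt_trichotomy a b with hab | rfl | hab
  · rw [integral_integral_arcSign_smul_signKernel ha.1 hab.le hb.2,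
      Real.sign_of_pos (sub_pos.2 hab), one_smul, mul_one]
  · simp
  · simp only [arcSign_comm a b]
    rw [integral_integral_arcSign_smul_signKernel hb.1 hab.le ha.2,
      Real.sign_of_neg (sub_neg.2 hab), ← neg_sub a b, Real.sin_neg, real_smul]
    push_cast
    ring

end SignKernel

section IteratedIntegral

variable {c : (Fin 5 → ℂ) → ℝ} {ψ θ : ℝ}

lemma integral_integral_exp_mul_cocycle (hc : OrientationProp c) (hψ : ψ ∈ Set.Ioo 0 (2 * π))
    (hθ : θ ∈ Set.Ioo 0 (2 * π)) (hψθ : ψ ≠ θ) :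
    ∫ φ in (0 : ℝ)..(2 * π), ∫ η in (0 : ℝ)..(2 * π),
        Complex.exp ((η - φ) * I) * (c ![Complex.exp (η * I), Complex.exp (φ * I),
          Complex.exp (ψ * I), 1, Complex.exp (θ * I)] : ℂ) =
      -(π ^ 2 / 6) * I * (2 * π * Real.sign (θ - ψ) + 4 * (Real.sin θ - Real.sin ψ)
        - 4 * Real.sin (θ - ψ) : ℝ) := by
  calc
    _ = ∫ φ in (0 : ℝ)..(2 * π), ∫ η in (0 : ℝ)..(2 * π),
          (π ^ 2 / 12 * Real.sign (θ - ψ)) •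
            arcSign ψ θ φ • arcSign ψ θ η • signKernel φ η := by
      refine integral_congr_Ioo_diff_countable (Set.to_countable {ψ, θ}) Real.two_pi_pos.le
        fun φ hφ hφs => ?_
      refine integral_congr_Ioo_diff_countable (Set.to_countable {φ, ψ, θ}) Real.two_pi_pos.le
        fun η hη hηs => ?_
      rw [hc.apply_one_exp hη hφ hψ hθ hηs hφs hψθ, signKernel]
      simp only [real_smul]
      push_cast
      ring
    _ = (π ^ 2 / 12) • Real.sign (θ - ψ) • ∫ φ in (0 : ℝ)..(2 * π), ∫ η in (0 : ℝ)..(2 * π),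
          arcSign ψ θ φ • arcSign ψ θ η • signKernel φ η := by
      rw [smul_smul]
      simp only [intervalIntegral.integral_smul]
    _ = _ := by
      rw [sign_sub_smul_integral_integral_arcSign (Set.Ioo_subset_Icc_self hψ)
        (Set.Ioo_subset_Icc_self hθ), real_smul]
      push_cast
      ring

lemma integral_sign_sub_add_sin (hθ : θ ∈ Set.Icc 0 (2 * π)) :
    ∫ ψ in (0 : ℝ)..(2 * π), (2 * π * Real.sign (θ - ψ) + 4 * (Real.sin θ - Real.sin ψ)
        - 4 * Real.sin (θ - ψ)) = 4 * π * (2 * Real.sin θ + θ - π) := by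
  have hsign : IntervalIntegrable (fun ψ => Real.sign (θ - ψ)) volume 0 (2 * π) := by
    simpa using intervalIntegrable_sign_sub_smul (g := fun _ => (1 : ℝ)) intervalIntegrable_const θ
  have hsin : IntervalIntegrable (fun ψ => 4 * (Real.sin θ - Real.sin ψ)) volume 0 (2 * π) :=
    Continuous.intervalIntegrable (by fun_prop) _ _
  rw [intervalIntegral.integral_sub ((hsign.const_mul _).add hsin)
      (Continuous.intervalIntegrable (by fun_prop) _ _),
    intervalIntegral.integral_add (hsign.const_mul _) hsin]
  simp only [intervalIntegral.integral_const_mul]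
  rw [integral_sign_sub hθ, intervalIntegral.integral_sub (by simp)
    (Continuous.intervalIntegrable (by fun_prop) _ _)]
  simp only [intervalIntegral.integral_const, intervalIntegral.integral_comp_sub_left, integral_sin,
    smul_eq_mul, sub_zero, sub_self, mul_zero, Real.cos_zero, Real.cos_two_pi, Real.cos_sub_two_pi]
  ring

end IteratedIntegral

/-- **Basic integral I₃.** For `θ ∈ (0, 2π)`,
`⨍⨍⨍ e^{i(η-φ)}·c(e^{iη}, e^{iφ}, e^{iψ}, 1, e^{iθ}) dη dφ dψ
= -i·(ζ(2)/(2π²))·(2·sin θ + θ - π)`. -/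
theorem basic_integral_I3 (c : (Fin 5 → ℂ) → ℝ) (hc : OrientationProp c)
    (θ : ℝ) (hθ : θ ∈ Set.Ioo (0:ℝ) (2 * π)) :
    (((1 / (2 * π)) ^ 3 : ℝ) : ℂ) *
        ∫ ψ in (0:ℝ)..(2 * π), ∫ φ in (0:ℝ)..(2 * π), ∫ η in (0:ℝ)..(2 * π),
          Complex.exp ((η - φ) * Complex.I) *
            ((c ![Complex.exp (η * Complex.I), Complex.exp (φ * Complex.I),
                Complex.exp (ψ * Complex.I), 1, Complex.exp (θ * Complex.I)] : ℝ) : ℂ)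
      = -Complex.I * (((π ^ 2 / 6) / (2 * π ^ 2) : ℝ) : ℂ) *
          ((2 * Real.sin θ + θ - π : ℝ) : ℂ) := by
  have triple_integral := integral_congr_Ioo_diff_countable (Set.countable_singleton θ)
    Real.two_pi_pos.le fun ψ hψ hψθ => integral_integral_exp_mul_cocycle hc hψ hθ hψθ
  rw [triple_integral, intervalIntegral.integral_const_mul, intervalIntegral.integral_ofReal,
    integral_sign_sub_add_sin (Set.Ioo_subset_Icc_self hθ)]
  have hπ : (π : ℂ) ≠ 0 := ofReal_ne_zero.2 Real.pi_ne_zero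
  push_cast
  field_simp
  ring
end
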